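/- arXiv:math/0607764 — 2 statements merged into one kernel-verified Lean document; each statement's English description precedes it below -/
import Mathlib

section
/- For p ≥ 1 let γ_p := c_{p−1} / (2·4^p), where c_m denotes the m-th Catalan number; these are the Taylor coefficients at 0 (in degrees p ≥ 1) of the function t ↦ 1/2 − (1/4)√(1−t), and they are all positive. Then for all integers p, q ≥ 1: Σ γ_{i₁}·γ_{i₂}·⋯·γ_{i_p} ≤ γ_q, where the sum is over all p-tuples (i₁,…,i_p) of positive integers with i₁ + … + i_p = q. Equivalently, in terms of Catalan numbers: Σ_{i₁+…+i_p = q, i_j ≥ 1} c_{i₁−1}·c_{i₂−1}·⋯·c_{i_p−1} ≤ 2^{p−1}·c_{q−1}. -/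
/-!
Write `C` for the Catalan series and `F = X * C`.  The functional equation `C = 1 + X * C ^ 2` reads
`F = X + F ^ 2`, so `F ^ 2 ≤ F` coefficientwise; multiplying by powers of `F`, which have nonnegative
coefficients, gives `F ^ p ≤ F` for all `p ≥ 1`.  The coefficient of `X ^ q` in `F ^ p` is the sum
over compositions, which is therefore bounded by `catalan (q - 1)`; this is stronger than the bound
`2 ^ (p - 1) * catalan (q - 1)`.  The inequality for `γ` is the latter one divided by `2 ^ p * 4 ^ q`.

For the Taylor expansion, put `b n = catalan n / 4 ^ (n + 1)`.  The Catalan recursion shows that the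
partial sums `A N` of `b` satisfy `A (N + 1) ≤ 1 / 4 + A N ^ 2`, hence `A N ≤ 1 / 2`.  So
`S = ∑ b n * t ^ (n + 1)` converges absolutely for `|t| ≤ 1` and `S ≤ 1 / 2`, while the Cauchy
product gives `S = t / 4 + S ^ 2`, i.e. `(1 - 2 * S) ^ 2 = 1 - t`; the bound on `S` selects the
nonnegative square root.
-/


open Finset

/-- `γ_p = c_{p-1} / (2·4^p)` (for `p ≥ 1`), the `p`-th Taylor coefficient at `0` of
`t ↦ 1/2 - (1/4)√(1-t)`. -/
noncomputable def gammaCoeff (p : ℕ) : ℝ := (catalan (p - 1) : ℝ) / (2 * 4 ^ p)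


open PowerSeries in
/-- The series `F = X * C`, with `C` the Catalan series, satisfies `F ^ 2 + X = F`. -/
lemma X_mul_catalanSeries_sq :
    ((X : PowerSeries ℕ) * catalanSeries) ^ 2 + X = X * catalanSeries := by
  conv_rhs => rw [← catalanSeries_sq_mul_X_add_one]
  ring

open PowerSeries in
/-- Coefficientwise, `F ^ (p + 1) ≤ F` for `F = X * C`. -/
lemma coeff_X_mul_catalanSeries_pow_le (p q : ℕ) :
    coeff q (((X : PowerSeries ℕ) * catalanSeries) ^ (p + 1)) ≤
      coeff q ((X : PowerSeries ℕ) * catalanSeries) := by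
  induction p with
  | zero => simp
  | succ p ih =>
    refine le_trans ?_ ih
    have h : ((X : PowerSeries ℕ) * catalanSeries) ^ (p + 1) =
        (X * catalanSeries) ^ (p + 1 + 1) + (X * catalanSeries) ^ p * X := by
      calc _ = (X * catalanSeries) ^ p * ((X : PowerSeries ℕ) * catalanSeries) := pow_succ _ p
        _ = (X * catalanSeries) ^ p * (((X : PowerSeries ℕ) * catalanSeries) ^ 2 + X) := by
          rw [X_mul_catalanSeries_sq]
        _ = _ := by ring
    rw [h, map_add]
    exact Nat.le_add_right _ _

open PowerSeries in
lemma coeff_X_mul_catalanSeries {n : ℕ} (hn : 1 ≤ n) :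
    coeff n ((X : PowerSeries ℕ) * catalanSeries) = catalan (n - 1) := by
  obtain ⟨m, rfl⟩ := Nat.exists_eq_add_of_le' hn
  simp [coeff_succ_X_mul]

open PowerSeries in
/-- The sum over compositions is bounded by the `q`-th coefficient of `(X * C) ^ p`. -/
lemma sum_prod_catalan_le (p q : ℕ) (hp : 1 ≤ p) (hq : 1 ≤ q) :
    ∑ I ∈ Finset.univ.filter (fun I : Fin p → Fin (q + 1) =>
        (∀ j, 1 ≤ (I j : ℕ)) ∧ (∑ j, (I j : ℕ)) = q),
      ∏ j, catalan ((I j : ℕ) - 1) ≤ catalan (q - 1) := by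
  obtain ⟨r, rfl⟩ := Nat.exists_eq_add_of_le' hp
  rw [← coeff_X_mul_catalanSeries hq]
  refine le_trans ?_ (coeff_X_mul_catalanSeries_pow_le r q)
  have hpow : ((X : PowerSeries ℕ) * catalanSeries) ^ (r + 1) =
      ∏ _j : Fin (r + 1), (X * catalanSeries) := by simp
  rw [hpow, coeff_prod]
  set e : (Fin (r + 1) → Fin (q + 1)) → (Fin (r + 1) →₀ ℕ) :=
    fun I => Finsupp.equivFunOnFinite.symm (fun j => (I j : ℕ)) with he
  have hinj : Function.Injective e := by
    intro I J h
    have h' := Finsupp.equivFunOnFinite.symm.injective h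
    funext j
    exact Fin.ext (congrFun h' j)
  calc _ = ∑ I ∈ Finset.univ.filter (fun I : Fin (r + 1) → Fin (q + 1) =>
            (∀ j, 1 ≤ (I j : ℕ)) ∧ (∑ j, (I j : ℕ)) = q),
          ∏ j, coeff (e I j) ((X : PowerSeries ℕ) * catalanSeries) := by
        refine Finset.sum_congr rfl fun I hI => Finset.prod_congr rfl fun j _ => ?_
        exact (coeff_X_mul_catalanSeries ((Finset.mem_filter.1 hI).2.1 j)).symm
    _ = ∑ l ∈ (Finset.univ.filter (fun I : Fin (r + 1) → Fin (q + 1) =>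
            (∀ j, 1 ≤ (I j : ℕ)) ∧ (∑ j, (I j : ℕ)) = q)).image e,
          ∏ j, coeff (l j) ((X : PowerSeries ℕ) * catalanSeries) := by
        rw [Finset.sum_image hinj.injOn]
    _ ≤ _ := by
        refine Finset.sum_le_sum_of_subset fun l hl => ?_
        obtain ⟨I, hI, rfl⟩ := Finset.mem_image.1 hl
        rw [Finset.mem_finsuppAntidiag]
        exact ⟨(Finset.mem_filter.1 hI).2.2, Finset.subset_univ _⟩

/-- The terms `a n = catalan n / 4 ^ (n + 1) * t ^ (n + 1)` inherit the Catalan convolution. -/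
lemma catalan_term_succ (t : ℝ) (n : ℕ) :
    (catalan (n + 1) : ℝ) / 4 ^ (n + 1 + 1) * t ^ (n + 1 + 1) =
      ∑ ij ∈ Finset.HasAntidiagonal.antidiagonal n, ((catalan ij.1 : ℝ) / 4 ^ (ij.1 + 1) * t ^ (ij.1 + 1)) *
        ((catalan ij.2 : ℝ) / 4 ^ (ij.2 + 1) * t ^ (ij.2 + 1)) := by
  rw [catalan_succ', Nat.cast_sum, Finset.sum_div, Finset.sum_mul]
  refine Finset.sum_congr rfl fun ij hij => ?_
  rw [← Finset.HasAntidiagonal.mem_antidiagonal.1 hij]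
  push_cast
  field_simp
  ring

lemma sum_catalan_div_le (N : ℕ) :
    ∑ n ∈ Finset.range N, (catalan n : ℝ) / 4 ^ (n + 1) ≤ 1 / 2 := by
  induction N with
  | zero => simp
  | succ N ih =>
    set b : ℕ → ℝ := fun n => (catalan n : ℝ) / 4 ^ (n + 1) with hb
    have hb0 : ∀ n, 0 ≤ b n := fun n => by positivity
    have hrec : ∀ n, b (n + 1) = ∑ ij ∈ Finset.HasAntidiagonal.antidiagonal n, b ij.1 * b ij.2 := fun n => by
      simpa using catalan_term_succ 1 n
    have hdisj : (↑(Finset.range N) : Set ℕ).PairwiseDisjoint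
        (fun n => Finset.HasAntidiagonal.antidiagonal n) := by
      intro m _ n _ hmn
      refine Finset.disjoint_left.2 fun x hx hy => hmn ?_
      rw [← Finset.HasAntidiagonal.mem_antidiagonal.1 hx, Finset.HasAntidiagonal.mem_antidiagonal.1 hy]
    -- the convolution sums of index `< N` run over a subset of the square `range N ×ˢ range N`
    have hle : ∑ n ∈ Finset.range N, b (n + 1) ≤ (∑ n ∈ Finset.range N, b n) ^ 2 := by
      rw [sq, Finset.sum_mul_sum, ← Finset.sum_product', Finset.sum_congr rfl fun n _ => hrec n,
        ← Finset.sum_biUnion hdisj]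
      refine Finset.sum_le_sum_of_subset_of_nonneg ?_ fun x _ _ => mul_nonneg (hb0 _) (hb0 _)
      intro x hx
      simp only [Finset.mem_biUnion, Finset.mem_range, Finset.HasAntidiagonal.mem_antidiagonal,
        Finset.mem_product] at hx ⊢
      obtain ⟨n, hn, hx⟩ := hx
      omega
    have h0 : 0 ≤ ∑ n ∈ Finset.range N, b n := Finset.sum_nonneg fun n _ => hb0 n
    have hb00 : b 0 = 1 / 4 := by simp [hb]
    change ∑ n ∈ Finset.range N, b n ≤ 1 / 2 at ih
    change ∑ n ∈ Finset.range (N + 1), b n ≤ 1 / 2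
    rw [Finset.sum_range_succ', hb00]
    nlinarith

lemma hasSum_gammaCoeff (t : ℝ) (ht : |t| < 1) :
    HasSum (fun p : ℕ => gammaCoeff (p + 1) * t ^ (p + 1))
      (1 / 2 - Real.sqrt (1 - t) / 4 - 1 / 4) := by
  set a : ℕ → ℝ := fun n => (catalan n : ℝ) / 4 ^ (n + 1) * t ^ (n + 1) with ha
  have hb0 : ∀ n : ℕ, 0 ≤ (catalan n : ℝ) / 4 ^ (n + 1) := fun n => by positivity
  have hbs : Summable fun n : ℕ => (catalan n : ℝ) / 4 ^ (n + 1) :=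
    summable_of_sum_range_le hb0 sum_catalan_div_le
  have hle : ∀ n, ‖a n‖ ≤ (catalan n : ℝ) / 4 ^ (n + 1) := fun n => by
    rw [ha, norm_mul, norm_pow, Real.norm_of_nonneg (hb0 n), Real.norm_eq_abs]
    exact mul_le_of_le_one_right (hb0 n) (pow_le_one₀ (abs_nonneg t) ht.le)
  have hn : Summable fun n => ‖a n‖ := Summable.of_nonneg_of_le (fun _ => norm_nonneg _) hle hbs
  have hs : Summable a := hn.of_norm
  have hS : ∑' n, a n ≤ 1 / 2 :=
    (hs.tsum_le_tsum (fun n => (Real.le_norm_self _).trans (hle n)) hbs).trans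
      (Real.tsum_le_of_sum_range_le hb0 sum_catalan_div_le)
  have hfun : ∑' n, a n = t / 4 + (∑' n, a n) ^ 2 := by
    rw [sq, tsum_mul_tsum_eq_tsum_sum_antidiagonal_of_summable_norm hn hn, hs.tsum_eq_zero_add]
    congr 1
    · simp [ha]; ring
    · exact tsum_congr fun n => catalan_term_succ t n
  have hsqrt : Real.sqrt (1 - t) = 1 - 2 * ∑' n, a n := by
    rw [show 1 - t = (1 - 2 * ∑' n, a n) ^ 2 by linarith]
    exact Real.sqrt_sq (by linarith)
  have hval : 1 / 2 - Real.sqrt (1 - t) / 4 - 1 / 4 = (1 / 2) * ∑' n, a n := by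
    rw [hsqrt]; ring
  rw [hval]
  refine (hs.hasSum.mul_left (1 / 2)).congr_fun ?_
  intro n
  simp only [ha, gammaCoeff, Nat.add_sub_cancel]
  field_simp

lemma catalan_pos' (n : ℕ) : 0 < catalan n := by
  have h := succ_mul_catalan_eq_centralBinom n
  have h' := Nat.centralBinom_pos n
  rw [← h] at h'
  exact Nat.pos_of_mul_pos_left h'

/-- The coefficients `γ_p = c_{p-1}/(2·4^p)` are the Taylor
coefficients at `0` (in degrees `p ≥ 1`) of `t ↦ 1/2 - (1/4)√(1-t)`; they are all
positive, and for all `p, q ≥ 1` one has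
`∑_{i₁+…+i_p = q, i_j ≥ 1} γ_{i₁}⋯γ_{i_p} ≤ γ_q`, equivalently
`∑_{i₁+…+i_p = q, i_j ≥ 1} c_{i₁-1}⋯c_{i_p-1} ≤ 2^(p-1)·c_{q-1}`. -/
theorem gamma_coefficients_inequality :
    -- the `γ_p` are the Taylor coefficients of `t ↦ 1/2 - (1/4)√(1-t)` in degrees `≥ 1`
    (∀ t : ℝ, |t| < 1 →
      HasSum (fun p : ℕ => gammaCoeff (p + 1) * t ^ (p + 1))
        (1 / 2 - Real.sqrt (1 - t) / 4 - 1 / 4)) ∧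
    -- positivity
    (∀ p : ℕ, 1 ≤ p → 0 < gammaCoeff p) ∧
    -- the submultiplicativity inequality
    (∀ p q : ℕ, 1 ≤ p → 1 ≤ q →
      ∑ I ∈ Finset.univ.filter (fun I : Fin p → Fin (q + 1) =>
          (∀ j, 1 ≤ (I j : ℕ)) ∧ (∑ j, (I j : ℕ)) = q),
        ∏ j, gammaCoeff (I j) ≤ gammaCoeff q) ∧
    -- equivalent form in terms of Catalan numbers
    (∀ p q : ℕ, 1 ≤ p → 1 ≤ q →
      ∑ I ∈ Finset.univ.filter (fun I : Fin p → Fin (q + 1) =>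
          (∀ j, 1 ≤ (I j : ℕ)) ∧ (∑ j, (I j : ℕ)) = q),
        ∏ j, catalan ((I j : ℕ) - 1) ≤ 2 ^ (p - 1) * catalan (q - 1)) := by
  have hcat : ∀ p q : ℕ, 1 ≤ p → 1 ≤ q →
      ∑ I ∈ Finset.univ.filter (fun I : Fin p → Fin (q + 1) =>
          (∀ j, 1 ≤ (I j : ℕ)) ∧ (∑ j, (I j : ℕ)) = q),
        ∏ j, catalan ((I j : ℕ) - 1) ≤ 2 ^ (p - 1) * catalan (q - 1) := fun p q hp hq =>
    (sum_prod_catalan_le p q hp hq).trans (Nat.le_mul_of_pos_left _ (by positivity))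
  refine ⟨hasSum_gammaCoeff, fun p _ => ?_, fun p q hp hq => ?_, hcat⟩
  · have := catalan_pos' (p - 1)
    unfold gammaCoeff
    positivity
  · have h : ((∑ I ∈ Finset.univ.filter (fun I : Fin p → Fin (q + 1) =>
          (∀ j, 1 ≤ (I j : ℕ)) ∧ (∑ j, (I j : ℕ)) = q),
        ∏ j, catalan ((I j : ℕ) - 1) : ℕ) : ℝ) ≤ ((2 ^ (p - 1) * catalan (q - 1) : ℕ) : ℝ) :=
      Nat.cast_le.2 (hcat p q hp hq)
    calc _ = ((∑ I ∈ Finset.univ.filter (fun I : Fin p → Fin (q + 1) =>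
          (∀ j, 1 ≤ (I j : ℕ)) ∧ (∑ j, (I j : ℕ)) = q),
        ∏ j, catalan ((I j : ℕ) - 1) : ℕ) : ℝ) / (2 ^ p * 4 ^ q) := by
          rw [Nat.cast_sum, Finset.sum_div]
          refine Finset.sum_congr rfl fun I hI => ?_
          simp only [gammaCoeff]
          rw [Finset.prod_div_distrib, Finset.prod_mul_distrib, Finset.prod_pow_eq_pow_sum,
            (Finset.mem_filter.1 hI).2.2]
          simp
      _ ≤ ((2 ^ (p - 1) * catalan (q - 1) : ℕ) : ℝ) / (2 ^ p * 4 ^ q) := by gcongr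
      _ = gammaCoeff q := by
          obtain ⟨r, rfl⟩ := Nat.exists_eq_add_of_le' hp
          simp only [gammaCoeff, Nat.add_sub_cancel]
          push_cast
          field_simp
          ring
end

section
/- Let E and F be seminormed vector spaces over ℝ (or ℂ), let p ≥ 1 be an integer, let φ : E × ⋯ × E → F be a symmetric p-linear map, and let C ≥ 0 be a constant such that ‖φ(x,…,x)‖ ≤ C·‖x‖^p for all x ∈ E. Then for all x₁,…,x_p ∈ E: ‖φ(x₁,…,x_p)‖ ≤ (p^p / p!) · C · ‖x₁‖·⋯·‖x_p‖. -/
/-!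
The bound rests on the polarization identity
`∑_ε (∏ i, ε i) φ(s_ε, …, s_ε) = 2 ^ p * p! * φ(x₁, …, x_p)`, where `ε` runs over `{1, -1}ᵖ` and
`s_ε = ∑ i, ε i • x i`. Expanding the left side by multilinearity gives a sum over maps
`g : Fin p → Fin p` of `φ (x ∘ g)` with coefficient `∑_ε (∏ i, ε i) (∏ j, ε (g j))`. If `g` misses
an index `k`, flipping the sign of `ε k` shows that the coefficient vanishes; if `g` is a
permutation, the coefficient is `2 ^ p` and `φ (x ∘ g) = φ x`.

When all `‖x i‖ ≤ 1`, each of the `2 ^ p` terms has norm at most `C * p ^ p`, which gives the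
estimate. The general case follows by scaling. As `‖x i‖` may be zero (even for `x i ≠ 0`, the norms
being seminorms), `x i` is divided by `‖x i‖ + δ`, and then `δ` tends to `0`.
-/

theorem sum_signs_eq_zero {p : ℕ} (g : Fin p → Fin p) (hg : ¬ Function.Surjective g) :
    ∑ ε : Fin p → ℤˣ, ((((∏ i, ε i) * ∏ j, ε (g j) : ℤˣ) : ℤ) : ℝ) = 0 := by
  simp only [Function.Surjective, not_forall, not_exists] at hg
  obtain ⟨k, hk⟩ := hg
  -- Flipping the sign at the missed index `k` changes the sign of each summand.
  have h := Equiv.sum_comp (Equiv.mulRight (Pi.mulSingle k (-1) : Fin p → ℤˣ))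
    (fun ε : Fin p → ℤˣ => ((((∏ i, ε i) * ∏ j, ε (g j) : ℤˣ) : ℤ) : ℝ))
  have h1 : ∏ i, (Pi.mulSingle k (-1) : Fin p → ℤˣ) i = -1 := by simp
  have h2 : ∏ j, (Pi.mulSingle k (-1) : Fin p → ℤˣ) (g j) = 1 :=
    Finset.prod_eq_one fun j _ => Pi.mulSingle_eq_of_ne (hk j) _
  simp only [Equiv.coe_mulRight, Pi.mul_apply, Finset.prod_mul_distrib, h1, h2, mul_one,
    mul_neg, neg_mul, Units.val_neg, Int.cast_neg, Finset.sum_neg_distrib] at h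
  linarith

theorem sum_signs_of_bijective {p : ℕ} (g : Fin p → Fin p) (hg : Function.Bijective g) :
    ∑ ε : Fin p → ℤˣ, ((((∏ i, ε i) * ∏ j, ε (g j) : ℤˣ) : ℤ) : ℝ) = 2 ^ p := by
  have h (ε : Fin p → ℤˣ) : (∏ i, ε i) * ∏ j, ε (g j) = 1 := by
    rw [hg.prod_comp, Int.units_mul_self]
  simp [h]

/-- Polarization identity: a symmetric multilinear map is recovered from its diagonal values. -/
theorem polarization_identity {E F : Type*} [AddCommGroup E] [Module ℝ E]
    [AddCommGroup F] [Module ℝ F] {p : ℕ} (φ : MultilinearMap ℝ (fun _ : Fin p => E) F)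
    (hsym : ∀ (σ : Equiv.Perm (Fin p)) (x : Fin p → E), φ (x ∘ σ) = φ x) (x : Fin p → E) :
    ∑ ε : Fin p → ℤˣ, (((∏ i, ε i : ℤˣ) : ℤ) : ℝ) •
      φ (fun _ => ∑ i, ((ε i : ℤ) : ℝ) • x i) = ((2 : ℝ) ^ p * (p.factorial : ℝ)) • φ x := by
  classical
  have hexp (ε : Fin p → ℤˣ) :
      (((∏ i, ε i : ℤˣ) : ℤ) : ℝ) • φ (fun _ => ∑ i, ((ε i : ℤ) : ℝ) • x i) =
      ∑ g : Fin p → Fin p,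
        ((((∏ i, ε i) * ∏ j, ε (g j) : ℤˣ) : ℤ) : ℝ) • φ (x ∘ g) := by
    rw [φ.map_sum (fun _ i => ((ε i : ℤ) : ℝ) • x i), Finset.smul_sum]
    refine Finset.sum_congr rfl fun g _ => ?_
    rw [φ.map_smul_univ (fun j => ((ε (g j) : ℤ) : ℝ)) (fun j => x (g j)), smul_smul]
    congr 1
    push_cast [Units.coe_prod]
    rfl
  have hterm (g : Fin p → Fin p) :
      (∑ ε : Fin p → ℤˣ, ((((∏ i, ε i) * ∏ j, ε (g j) : ℤˣ) : ℤ) : ℝ)) • φ (x ∘ g) =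
      if Function.Bijective g then (2 : ℝ) ^ p • φ x else 0 := by
    split_ifs with hg
    · rw [sum_signs_of_bijective g hg]
      congr 1
      exact hsym (Equiv.ofBijective g hg) x
    · rw [sum_signs_eq_zero g (fun h => hg (Finite.surjective_iff_bijective.mp h)), zero_smul]
  have hcard : (Finset.univ.filter fun g : Fin p → Fin p => Function.Bijective g).card =
      p.factorial := by
    rw [← Fintype.card_subtype, ← Fintype.card_congr (Equiv.ofBijective
      (fun σ : Equiv.Perm (Fin p) =>
        (⟨σ, σ.bijective⟩ : {g : Fin p → Fin p // Function.Bijective g}))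
      ⟨fun σ τ h => DFunLike.coe_injective (congrArg Subtype.val h),
        fun g => ⟨Equiv.ofBijective g.1 g.2, rfl⟩⟩), Fintype.card_perm, Fintype.card_fin]
  simp_rw [hexp]
  rw [Finset.sum_comm]
  simp_rw [← Finset.sum_smul, hterm]
  rw [← Finset.sum_filter, Finset.sum_const, hcard, ← Nat.cast_smul_eq_nsmul ℝ, smul_smul,
    mul_comm]

theorem polarization_estimate_unit {E F : Type*} [SeminormedAddCommGroup E] [NormedSpace ℝ E]
    [SeminormedAddCommGroup F] [NormedSpace ℝ F] {p : ℕ}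
    (φ : MultilinearMap ℝ (fun _ : Fin p => E) F)
    (hsym : ∀ (σ : Equiv.Perm (Fin p)) (x : Fin p → E), φ (x ∘ σ) = φ x)
    (C : ℝ) (hC : 0 ≤ C) (hdiag : ∀ x : E, ‖φ (fun _ => x)‖ ≤ C * ‖x‖ ^ p)
    (x : Fin p → E) (hx : ∀ i, ‖x i‖ ≤ 1) :
    ‖φ x‖ ≤ (p : ℝ) ^ p / (p.factorial : ℝ) * C := by
  have hsign (u : ℤˣ) : ‖((u : ℤ) : ℝ)‖ = 1 := by
    rcases Int.units_eq_one_or u with rfl | rfl <;> simp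
  have hterm (ε : Fin p → ℤˣ) : ‖(((∏ i, ε i : ℤˣ) : ℤ) : ℝ) •
      φ (fun _ => ∑ i, ((ε i : ℤ) : ℝ) • x i)‖ ≤ C * (p : ℝ) ^ p := by
    rw [norm_smul, hsign, one_mul]
    refine (hdiag _).trans ?_
    have : ‖∑ i, ((ε i : ℤ) : ℝ) • x i‖ ≤ p := by
      refine (norm_sum_le_of_le (f := fun i => ((ε i : ℤ) : ℝ) • x i) Finset.univ
        (n := fun _ => (1 : ℝ)) fun i _ => ?_).trans (by simp)
      rw [norm_smul, hsign, one_mul]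
      exact hx i
    gcongr
  have h := norm_sum_le_of_le Finset.univ fun ε _ => hterm ε
  rw [polarization_identity φ hsym x, norm_smul, Real.norm_of_nonneg (by positivity)] at h
  simp only [Finset.sum_const, Finset.card_univ, Fintype.card_pi, Fintype.card_units_int,
    Finset.prod_const, Fintype.card_fin, nsmul_eq_mul, Nat.cast_pow, Nat.cast_ofNat,
    mul_assoc] at h
  have h' := le_of_mul_le_mul_left h (by positivity)
  rw [div_mul_eq_mul_div, le_div_iff₀ (by positivity)]
  linarith


/-- **polarization estimate.**  Let `E`, `F` be seminormed vector spaces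
over `ℝ`, `p ≥ 1`, and `φ : E × ⋯ × E → F` a symmetric `p`-linear map such that
`‖φ(x,…,x)‖ ≤ C‖x‖^p` for all `x`.  Then
`‖φ(x₁,…,x_p)‖ ≤ (p^p/p!)·C·‖x₁‖⋯‖x_p‖`. -/
theorem polarization_estimate
    {E F : Type} [SeminormedAddCommGroup E] [NormedSpace ℝ E]
    [SeminormedAddCommGroup F] [NormedSpace ℝ F]
    (p : ℕ) (hp : 1 ≤ p)
    (φ : MultilinearMap ℝ (fun _ : Fin p => E) F)
    (hsym : ∀ (σ : Equiv.Perm (Fin p)) (x : Fin p → E), φ (x ∘ σ) = φ x)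
    (C : ℝ) (hC : 0 ≤ C)
    (hdiag : ∀ x : E, ‖φ (fun _ => x)‖ ≤ C * ‖x‖ ^ p)
    (x : Fin p → E) :
    ‖φ x‖ ≤ ((p : ℝ) ^ p / (p.factorial : ℝ)) * C * ∏ i, ‖x i‖ := by
  set K : ℝ := (p : ℝ) ^ p / (p.factorial : ℝ) * C
  have hδ (δ : ℝ) (hδ : 0 < δ) : ‖φ x‖ ≤ K * ∏ i, (‖x i‖ + δ) := by
    have hpos (i : Fin p) : 0 < ‖x i‖ + δ := by positivity
    have hscale : φ x = (∏ i, (‖x i‖ + δ)) • φ (fun i => (‖x i‖ + δ)⁻¹ • x i) := by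
      rw [← φ.map_smul_univ]
      congr 1
      ext i
      rw [smul_inv_smul₀ (hpos i).ne']
    have hunit := polarization_estimate_unit φ hsym C hC hdiag
      (fun i => (‖x i‖ + δ)⁻¹ • x i) fun i => by
        rw [norm_smul, norm_inv, Real.norm_of_nonneg (hpos i).le, inv_mul_le_one₀ (hpos i)]
        linarith
    have hprod : 0 ≤ ∏ i, (‖x i‖ + δ) := Finset.prod_nonneg fun i _ => (hpos i).le
    rw [hscale, norm_smul, Real.norm_of_nonneg hprod, mul_comm]
    exact mul_le_mul_of_nonneg_right hunit hprod
  have hlim : Filter.Tendsto (fun δ : ℝ => K * ∏ i, (‖x i‖ + δ))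
      (nhdsWithin 0 (Set.Ioi 0)) (nhds (K * ∏ i, ‖x i‖)) := by
    have hcont : Continuous fun δ : ℝ => K * ∏ i, (‖x i‖ + δ) := by fun_prop
    simpa using (hcont.tendsto 0).mono_left nhdsWithin_le_nhds
  exact ge_of_tendsto hlim (Filter.eventually_of_mem self_mem_nhdsWithin fun δ h => hδ δ h)
end
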